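/- Let φ : ℂ → ℂ be a smooth (C^∞) function with compact support, and let k ≥ 1 be an integer. Define the Wirtinger operator ∂ by (∂ψ)(w) = (1/2)·(Dψ(w)(1) − i·Dψ(w)(i)), where Dψ(w) is the real Fréchet derivative of ψ at w, and let ∂^{k−1}φ denote its (k−1)-fold iterate applied to φ. Then there exist δ > 0 and a function g : ℂ → ℂ holomorphic on {λ ∈ ℂ : Re λ > −δ} such that for every λ ∈ ℂ with Re λ > k/2, the function z ↦ ‖z‖^{2λ} · z^{−k} · \bar{z}^{−1} · φ(z) is integrable on ℂ and g(λ) = λ · ∫_ℂ ‖z‖^{2λ} · z^{−k} · \bar{z}^{−1} · φ(z) dA(z); moreover g(0) = (π/(k−1)!) · (∂^{k−1}φ)(0). -/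

import Mathlib

/-- The Wirtinger operator `∂ψ(w) = (1/2)(Dψ(w)(1) - i·Dψ(w)(i))`, where
`Dψ(w)` is the real Fréchet derivative of `ψ` at `w`. -/
noncomputable def wirtingerDeriv (ψ : ℂ → ℂ) (w : ℂ) : ℂ :=
  (1 / 2 : ℂ) * (fderiv ℝ ψ w 1 - Complex.I * fderiv ℝ ψ w Complex.I)

noncomputable def wirtingerBar (ψ : ℂ → ℂ) (w : ℂ) : ℂ :=
  (1 / 2 : ℂ) * (fderiv ℝ ψ w 1 + Complex.I * fderiv ℝ ψ w Complex.I)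

lemma wirt_smooth {ψ : ℂ → ℂ} (h : ContDiff ℝ (⊤ : ℕ∞) ψ) :
    ContDiff ℝ (⊤ : ℕ∞) (wirtingerDeriv ψ) := by
  have h1 : ContDiff ℝ (⊤ : ℕ∞) (fderiv ℝ ψ) := h.fderiv_right (by simp)
  unfold wirtingerDeriv
  exact contDiff_const.mul ((h1.clm_apply contDiff_const).sub
    (contDiff_const.mul (h1.clm_apply contDiff_const)))

lemma wirtBar_smooth {ψ : ℂ → ℂ} (h : ContDiff ℝ (⊤ : ℕ∞) ψ) :
    ContDiff ℝ (⊤ : ℕ∞) (wirtingerBar ψ) := by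
  have h1 : ContDiff ℝ (⊤ : ℕ∞) (fderiv ℝ ψ) := h.fderiv_right (by simp)
  unfold wirtingerBar
  exact contDiff_const.mul ((h1.clm_apply contDiff_const).add
    (contDiff_const.mul (h1.clm_apply contDiff_const)))

lemma fderiv_wirt (ψ : ℂ → ℂ) (w z : ℂ) :
    fderiv ℝ ψ w z = z * wirtingerDeriv ψ w + starRingEnd ℂ z * wirtingerBar ψ w := by
  have hz : z = z.re • (1 : ℂ) + z.im • Complex.I := by
    simp [Complex.re_add_im]
  have h1 : fderiv ℝ ψ w z = z.re * fderiv ℝ ψ w 1 + z.im * fderiv ℝ ψ w Complex.I := by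
    conv_lhs => rw [hz]
    rw [map_add, map_smul, map_smul]; simp
  have h2 : starRingEnd ℂ z = z.re - z.im * Complex.I := by
    apply Complex.ext <;> simp
  rw [h1, h2]
  conv_rhs => enter [1, 1]; rw [← Complex.re_add_im z]
  unfold wirtingerDeriv wirtingerBar
  linear_combination ((z.im : ℂ) * fderiv ℝ ψ w Complex.I) * Complex.I_mul_I

lemma line_deriv {ψ : ℂ → ℂ} (h : ContDiff ℝ (⊤ : ℕ∞) ψ) (z : ℂ) (t : ℝ) :
    HasDerivAt (fun t : ℝ => ψ (t * z))
      (z * wirtingerDeriv ψ (t * z) + starRingEnd ℂ z * wirtingerBar ψ (t * z)) t := by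
  have h1 : HasDerivAt (fun t : ℝ => (t : ℂ) * z) z t := by
    simpa using (Complex.ofRealCLM.hasDerivAt (x := t)).mul_const z
  have h2 := ((h.differentiable (by simp)) ((t : ℂ) * z)).hasFDerivAt
  have h3 := h2.comp_hasDerivAt t h1
  rw [fderiv_wirt] at h3
  exact h3

lemma line_iter {φ : ℂ → ℂ} (h : ContDiff ℝ (⊤ : ℕ∞) φ) (n : ℕ) :
    ∃ ψ : ℕ → ℂ → ℂ, (∀ j, ContDiff ℝ (⊤ : ℕ∞) (ψ j)) ∧ ψ n = wirtingerDeriv^[n] φ ∧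
      ∀ z : ℂ, ∀ t : ℝ, iteratedDeriv n (fun t : ℝ => φ (t * z)) t =
        ∑ j ∈ Finset.range (n + 1), z ^ j * starRingEnd ℂ z ^ (n - j) * ψ j (t * z) := by
  induction n with
  | zero => exact ⟨fun _ => φ, fun _ => h, rfl, fun z t => by simp⟩
  | succ n ih =>
    obtain ⟨ψ, hs, hn, hd⟩ := ih
    refine ⟨fun j w => (if j = 0 then 0 else wirtingerDeriv (ψ (j - 1)) w) +
      (if j = n + 1 then 0 else wirtingerBar (ψ j) w), ?_, ?_, ?_⟩
    · intro j
      refine ContDiff.add ?_ ?_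
      · split_ifs
        · exact contDiff_const
        · exact wirt_smooth (hs _)
      · split_ifs
        · exact contDiff_const
        · exact wirtBar_smooth (hs _)
    · funext w
      simp [hn, Function.iterate_succ_apply']
    · intro z t
      rw [iteratedDeriv_succ]
      have e : iteratedDeriv n (fun t : ℝ => φ (t * z)) = fun t : ℝ =>
        ∑ j ∈ Finset.range (n + 1), z ^ j * starRingEnd ℂ z ^ (n - j) * ψ j (t * z) :=
        funext (hd z)
      rw [e]
      have hder : HasDerivAt (fun t : ℝ =>
        ∑ j ∈ Finset.range (n + 1), z ^ j * starRingEnd ℂ z ^ (n - j) * ψ j (t * z))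
        (∑ j ∈ Finset.range (n + 1), z ^ j * starRingEnd ℂ z ^ (n - j) *
          (z * wirtingerDeriv (ψ j) (t * z) + starRingEnd ℂ z * wirtingerBar (ψ j) (t * z))) t :=
        HasDerivAt.fun_sum fun j _ => (line_deriv (hs j) z t).const_mul _
      rw [hder.deriv]
      simp only [mul_add, Finset.sum_add_distrib]
      congr 1
      · rw [Finset.sum_range_succ' _ (n + 1)]
        simp only [Nat.add_sub_add_right, Nat.add_sub_cancel, if_true, mul_zero, add_zero,
          Nat.succ_ne_zero, if_false]
        exact Finset.sum_congr rfl fun j _ => by ring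
      · rw [Finset.sum_range_succ _ (n + 1)]
        simp only [if_true, mul_zero, add_zero]
        refine Finset.sum_congr rfl fun j hj => ?_
        have hj' : j < n + 1 := Finset.mem_range.1 hj
        rw [if_neg hj'.ne, show n + 1 - j = (n - j) + 1 by omega]
        ring

lemma taylor_wirt {φ : ℂ → ℂ} (h : ContDiff ℝ (⊤ : ℕ∞) φ) (m : ℕ) :
    ∃ (d : ℕ → ℕ → ℂ) (C : ℝ), d m m = (wirtingerDeriv^[m] φ) 0 / (Nat.factorial m : ℂ) ∧
      ∀ z : ℂ, ‖z‖ ≤ 1 → ‖φ z - ∑ n ∈ Finset.range (m + 1), ∑ j ∈ Finset.range (n + 1),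
        d n j * (z ^ j * starRingEnd ℂ z ^ (n - j))‖ ≤ C * ‖z‖ ^ (m + 1) := by
  choose ψ hs hn hd using fun n => line_iter h n
  have hb : ∀ j, ∃ M, ∀ w ∈ Metric.closedBall (0 : ℂ) 1, ‖ψ (m + 1) j w‖ ≤ M := fun j =>
    (isCompact_closedBall (0 : ℂ) 1).exists_bound_of_continuousOn (hs (m+1) j).continuous.continuousOn
  choose M hM using hb
  refine ⟨fun n j => ψ n j 0 / (Nat.factorial n : ℂ),
    (∑ j ∈ Finset.range (m + 2), M j) / (Nat.factorial m), by simp [hn], fun z hz => ?_⟩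
  have hf : ContDiff ℝ (⊤ : ℕ∞) (fun t : ℝ => φ (t * z)) :=
    h.comp (Complex.ofRealCLM.contDiff.mul contDiff_const)
  have hit : ∀ n, ∀ t ∈ Set.Icc (0:ℝ) 1, iteratedDerivWithin n (fun t : ℝ => φ (t * z)) (Set.Icc 0 1) t
      = iteratedDeriv n (fun t : ℝ => φ (t * z)) t := fun n t ht =>
    iteratedDerivWithin_eq_iteratedDeriv (uniqueDiffOn_Icc one_pos)
      ((hf.of_le (by exact_mod_cast le_top)).contDiffAt) ht
  have key := taylor_mean_remainder_bound (f := fun t : ℝ => φ (t * z)) (a := 0) (b := 1) (x := 1)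
    (n := m) (C := (∑ j ∈ Finset.range (m + 2), M j) * ‖z‖ ^ (m + 1)) zero_le_one
    (hf.of_le (by exact_mod_cast le_top)).contDiffOn (by simp) (by
      intro t ht
      rw [hit _ t ht, hd, Finset.sum_mul]
      refine (norm_sum_le _ _).trans (Finset.sum_le_sum fun j hj => ?_)
      have hj' : j < m + 2 := Finset.mem_range.1 hj
      rw [norm_mul, norm_mul, norm_pow, norm_pow, RCLike.norm_conj, ← pow_add,
        show j + (m + 1 - j) = m + 1 by omega, mul_comm]
      refine mul_le_mul_of_nonneg_right (hM _ _ ?_) (by positivity)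
      rw [mem_closedBall_zero_iff, norm_mul, Complex.norm_real, Real.norm_of_nonneg ht.1]
      nlinarith [norm_nonneg z, ht.1, ht.2])
  rw [taylor_within_apply] at key
  have h0 : (0:ℝ) ∈ Set.Icc (0:ℝ) 1 := by simp
  convert key using 1
  · congr 1
    congr 1
    · simp
    · refine Finset.sum_congr rfl fun n _ => ?_
      rw [hit n 0 h0, hd, Finset.smul_sum]
      refine Finset.sum_congr rfl fun j _ => ?_
      simp; ring
  · simp; ring

noncomputable def kerK (k : ℕ) (l z : ℂ) : ℂ :=
  ((‖z‖ ^ 2 : ℝ) : ℂ) ^ l * z ^ (-(k : ℤ)) * (starRingEnd ℂ z)⁻¹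

lemma kerK_meas (k : ℕ) (l : ℂ) : Measurable (kerK k l) := by
  unfold kerK
  refine Measurable.mul (Measurable.mul ?_ ?_) ?_
  · exact (Complex.measurable_ofReal.comp (measurable_norm.pow_const 2)).pow_const l
  · simp only [zpow_neg, zpow_natCast]
    exact (measurable_id.pow_const k).inv
  · exact (Complex.continuous_conj.measurable).inv

lemma kerK_norm (k : ℕ) (l : ℂ) {z : ℂ} (hz : z ≠ 0) :
    ‖kerK k l z‖ = (‖z‖ ^ 2) ^ l.re * (‖z‖ ^ (k + 1))⁻¹ := by
  have h : 0 < ‖z‖ ^ 2 := by positivity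
  unfold kerK
  rw [norm_mul, norm_mul, Complex.norm_cpow_eq_rpow_re_of_pos h, norm_zpow, norm_inv,
    RCLike.norm_conj, zpow_neg, zpow_natCast, pow_succ _ k, mul_inv, mul_assoc]

lemma sq_rpow_norm {z : ℂ} (e : ℝ) : (‖z‖ ^ 2) ^ e = ‖z‖ ^ (2 * e) := by
  rw [Real.rpow_mul (norm_nonneg z)]; simp

lemma integrable_pow_ball (p ρ : ℝ) (hp : -2 < p) (hρ : 0 < ρ) :
    MeasureTheory.Integrable ((Metric.ball (0 : ℂ) ρ).indicator fun z => ‖z‖ ^ p) := by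
  rw [MeasureTheory.integrable_indicator_iff measurableSet_ball,
    MeasureTheory.integrableOn_fun_norm_addHaar MeasureTheory.volume (f := fun x : ℝ => x ^ p)]
  have : MeasureTheory.IntegrableOn (fun y : ℝ => y ^ (p + 1)) (Set.Ioo 0 ρ) :=
    (intervalIntegral.integrableOn_Ioo_rpow_iff hρ).2 (by linarith)
  refine this.congr_fun (fun y hy => ?_) measurableSet_Ioo
  simp only [Complex.finrank_real_complex]
  rw [Real.rpow_add_one hy.1.ne']
  simp [mul_comm]

lemma ae_ne_zero : ∀ᵐ z : ℂ, z ≠ 0 := by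
  simp [MeasureTheory.ae_iff]

lemma integrable_of_bound {G : ℂ → ℂ} (hG : Measurable G) (p ρ C : ℝ) (hp : -2 < p) (hρ : 0 < ρ)
    (h1 : ∀ z, z ≠ 0 → ‖z‖ < ρ → ‖G z‖ ≤ C * ‖z‖ ^ p) (h2 : ∀ z, ρ ≤ ‖z‖ → G z = 0) :
    MeasureTheory.Integrable G := by
  refine ((integrable_pow_ball p ρ hp hρ).const_mul C).mono' hG.aestronglyMeasurable ?_
  filter_upwards [ae_ne_zero] with z hz
  by_cases h : ‖z‖ < ρ
  · rw [Set.indicator_of_mem (by simpa using h)]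
    exact h1 z hz h
  · rw [Set.indicator_of_notMem (by simpa using h), h2 z (not_lt.1 h)]
    simp

lemma rpow_log_bound {y e0 e1 s ε : ℝ} (hy : 0 < y) (hε : 0 < ε) (h0 : e0 + ε ≤ s)
    (h1 : s + ε ≤ e1) : y ^ s * |Real.log y| ≤ (y ^ e0 + y ^ e1) / ε := by
  have p0 := Real.rpow_pos_of_pos hy e0
  have p1 := Real.rpow_pos_of_pos hy e1
  have ps := Real.rpow_pos_of_pos hy s
  rcases le_total 1 y with h | h
  · rw [abs_of_nonneg (Real.log_nonneg h)]
    calc y ^ s * Real.log y ≤ y ^ s * (y ^ ε / ε) :=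
          mul_le_mul_of_nonneg_left (Real.log_le_rpow_div hy.le hε) ps.le
      _ = y ^ (s + ε) / ε := by rw [Real.rpow_add hy]; ring
      _ ≤ (y ^ e0 + y ^ e1) / ε := by
          gcongr
          have := Real.rpow_le_rpow_of_exponent_le h h1
          linarith
  · rw [abs_of_nonpos (Real.log_nonpos hy.le h), ← Real.log_inv]
    calc y ^ s * Real.log y⁻¹ ≤ y ^ s * (y⁻¹ ^ ε / ε) :=
          mul_le_mul_of_nonneg_left (Real.log_le_rpow_div (inv_pos.2 hy).le hε) ps.le
      _ = y ^ (s - ε) / ε := by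
          rw [Real.rpow_sub hy, Real.inv_rpow hy.le]; ring
      _ ≤ (y ^ e0 + y ^ e1) / ε := by
          gcongr
          have := Real.rpow_le_rpow_of_exponent_ge hy h (show e0 ≤ s - ε by linarith)
          linarith

lemma ker_R_integrable {R : ℂ → ℂ} (hR : Measurable R) (k : ℕ) (ρ C : ℝ) (hρ : 0 < ρ)
    (h1 : ∀ z, ‖R z‖ ≤ C * ‖z‖ ^ k) (h2 : ∀ z, ρ ≤ ‖z‖ → R z = 0) (l : ℂ) (hl : -(1/2) < l.re) :
    MeasureTheory.Integrable fun z => kerK k l z * R z := by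
  refine integrable_of_bound ((kerK_meas k l).mul hR) (2 * l.re - 1) ρ C (by linarith) hρ
    (fun z hz _ => ?_) (fun z hz => by simp [h2 z hz])
  have hz' : 0 < ‖z‖ := norm_pos_iff.2 hz
  rw [norm_mul, kerK_norm k l hz]
  calc _ ≤ (‖z‖ ^ 2) ^ l.re * (‖z‖ ^ (k + 1))⁻¹ * (C * ‖z‖ ^ k) := by
        gcongr; exact h1 z
    _ = C * ‖z‖ ^ (2 * l.re - 1) := by
        rw [sq_rpow_norm, Real.rpow_sub_one hz'.ne', pow_succ]; field_simp

lemma ker_R_diff {R : ℂ → ℂ} (hR : Measurable R) (k : ℕ) (ρ C : ℝ) (hρ : 0 < ρ)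
    (h1 : ∀ z, ‖R z‖ ≤ C * ‖z‖ ^ k) (h2 : ∀ z, ρ ≤ ‖z‖ → R z = 0) (l : ℂ) (hl : -(1/2) < l.re) :
    DifferentiableAt ℂ (fun l => ∫ z, kerK k l z * R z) l := by
  set ε := (l.re + 1 / 2) / 4 with hε
  have hε0 : 0 < ε := by rw [hε]; linarith
  set e0 := l.re - 2 * ε with he0
  set e1 := l.re + 2 * ε with he1
  have key := hasDerivAt_integral_of_dominated_loc_of_deriv_le (𝕜 := ℂ) (μ := MeasureTheory.volume)
    (F := fun l z => kerK k l z * R z)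
    (F' := fun l z => Complex.log ((‖z‖ ^ 2 : ℝ) : ℂ) * (kerK k l z * R z))
    (x₀ := l) (s := Metric.ball l ε)
    (bound := fun z => (C / ε) * ((Metric.ball (0 : ℂ) ρ).indicator (fun z => ‖z‖ ^ (2 * e0 - 1)) z
      + (Metric.ball (0 : ℂ) ρ).indicator (fun z => ‖z‖ ^ (2 * e1 - 1)) z))
    (Metric.ball_mem_nhds l hε0)
    (Filter.Eventually.of_forall fun l => ((kerK_meas k l).mul hR).aestronglyMeasurable)
    (ker_R_integrable hR k ρ C hρ h1 h2 l hl)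
    (((Complex.measurable_log.comp (Complex.measurable_ofReal.comp
      (measurable_norm.pow_const 2))).mul ((kerK_meas k l).mul hR)).aestronglyMeasurable)
    ?_ (((integrable_pow_ball _ ρ (by rw [he0, hε]; linarith) hρ).add
      (integrable_pow_ball _ ρ (by rw [he1, hε]; linarith) hρ)).const_mul _) ?_
  · exact key.2.differentiableAt
  · filter_upwards [ae_ne_zero] with z hz l' hl'
    have hz' : 0 < ‖z‖ := norm_pos_iff.2 hz
    have hy : 0 < ‖z‖ ^ 2 := by positivity
    by_cases h : ‖z‖ < ρ
    · rw [Set.indicator_of_mem (by simpa using h), Set.indicator_of_mem (by simpa using h)]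
      rw [norm_mul, norm_mul, kerK_norm k l' hz, ← Complex.ofReal_log hy.le, Complex.norm_real,
        Real.norm_eq_abs]
      have hre : |l'.re - l.re| < ε := by
        rw [Metric.mem_ball, dist_eq_norm] at hl'
        exact (by simpa using Complex.abs_re_le_norm (l' - l) : _ ≤ _).trans_lt hl'
      rw [abs_lt] at hre
      have hb := rpow_log_bound (y := ‖z‖ ^ 2) (e0 := e0) (e1 := e1) (s := l'.re) hy hε0
        (by linarith) (by linarith)
      calc |Real.log (‖z‖ ^ 2)| * ((‖z‖ ^ 2) ^ l'.re * (‖z‖ ^ (k + 1))⁻¹ * ‖R z‖)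
          = ((‖z‖ ^ 2) ^ l'.re * |Real.log (‖z‖ ^ 2)|) * ((‖z‖ ^ (k + 1))⁻¹ * ‖R z‖) := by ring
        _ ≤ (((‖z‖ ^ 2) ^ e0 + (‖z‖ ^ 2) ^ e1) / ε) * ((‖z‖ ^ (k + 1))⁻¹ * (C * ‖z‖ ^ k)) := by
            gcongr; exact h1 z
        _ = _ := by
            rw [sq_rpow_norm, sq_rpow_norm, Real.rpow_sub_one hz'.ne', Real.rpow_sub_one hz'.ne',
              pow_succ]
            field_simp
    · rw [h2 z (not_lt.1 h), Set.indicator_of_notMem (by simpa using h),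
        Set.indicator_of_notMem (by simpa using h)]
      simp
  · filter_upwards [ae_ne_zero] with z hz l' hl'
    have hy : ((‖z‖ ^ 2 : ℝ) : ℂ) ≠ 0 := by
      have : ‖z‖ ≠ 0 := norm_ne_zero_iff.2 hz
      exact_mod_cast pow_ne_zero 2 this
    have := (((hasDerivAt_id l').const_cpow (c := ((‖z‖ ^ 2 : ℝ) : ℂ)) (Or.inl hy)).mul_const
      (z ^ (-(k : ℤ)))).mul_const ((starRingEnd ℂ z)⁻¹) |>.mul_const (R z)
    unfold kerK
    refine this.congr_deriv ?_
    simp only [id]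
    ring

/-- monomial terms on the unit disc -/
lemma mono_integrable (k a b : ℕ) (l : ℂ) (hl : (k : ℝ) / 2 < l.re) :
    MeasureTheory.Integrable fun z => kerK k l z *
      (Metric.ball (0 : ℂ) 1).indicator (fun z => z ^ a * starRingEnd ℂ z ^ b) z := by
  refine integrable_of_bound ((kerK_meas k l).mul (Measurable.indicator ?_ measurableSet_ball))
    (2 * l.re - k - 1) 1 1 (by linarith) one_pos
    (fun z hz hz1 => ?_) (fun z hz => by
      rw [Set.indicator_of_notMem (by simpa using hz), mul_zero])
  · exact ((continuous_id.pow a).mul (Complex.continuous_conj.pow b)).measurable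
  · have hz' : 0 < ‖z‖ := norm_pos_iff.2 hz
    rw [norm_mul, kerK_norm k l hz, Set.indicator_of_mem (by simpa using hz1), norm_mul, norm_pow,
      norm_pow, RCLike.norm_conj, sq_rpow_norm, Real.rpow_sub_one hz'.ne', Real.rpow_sub_natCast hz'.ne',
      pow_succ, one_mul, ← pow_add, div_div, div_eq_mul_inv]
    exact mul_le_of_le_one_right (by positivity) (pow_le_one₀ hz'.le hz1.le)

lemma mono_zero (k a b : ℕ) (l : ℂ) (hab : (a : ℤ) - k - b + 1 ≠ 0) :
    ∫ z, kerK k l z *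
      (Metric.ball (0 : ℂ) 1).indicator (fun z => z ^ a * starRingEnd ℂ z ^ b) z = 0 := by
  set m : ℤ := (a : ℤ) - k - b + 1 with hm
  set F : ℂ → ℂ := fun z => kerK k l z *
      (Metric.ball (0 : ℂ) 1).indicator (fun z => z ^ a * starRingEnd ℂ z ^ b) z with hF
  set u : Circle := Circle.exp (Real.pi / m) with hu
  have hum : (u : ℂ) ^ m = -1 := by
    rw [hu, Circle.coe_exp, ← Complex.exp_int_mul]
    have hm0 : (m : ℂ) ≠ 0 := by exact_mod_cast hab
    rw [show (m : ℂ) * (((Real.pi / m : ℝ) : ℂ) * Complex.I) = Real.pi * Complex.I by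
      push_cast; field_simp]
    exact Complex.exp_pi_mul_I
  have hu0 : (u : ℂ) ≠ 0 := Circle.coe_ne_zero u
  have hcu : starRingEnd ℂ (u : ℂ) = (u : ℂ)⁻¹ := by
    rw [← Circle.coe_inv_eq_conj, Circle.coe_inv]
  have hrot : ∀ z, F (rotation u z) = - F z := by
    intro z
    have hn : ‖(u : ℂ) * z‖ = ‖z‖ := by rw [norm_mul, Circle.norm_coe, one_mul]
    simp only [hF, rotation_apply, kerK, hn]
    by_cases h : ‖z‖ < 1
    · rw [Set.indicator_of_mem (by rwa [mem_ball_zero_iff, hn]),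
        Set.indicator_of_mem (by simpa using h)]
      rw [map_mul, hcu, ← neg_one_mul (_ * _), ← hum, hm, mul_zpow, mul_pow, mul_pow, mul_inv, inv_inv,
        zpow_add₀ hu0, zpow_sub₀ hu0, zpow_sub₀ hu0, zpow_neg, zpow_natCast,
        zpow_natCast, zpow_natCast, zpow_one, inv_pow]
      field_simp
    · rw [Set.indicator_of_notMem (by rwa [mem_ball_zero_iff, hn]),
        Set.indicator_of_notMem (by simpa using h)]
      simp
  have hI : ∫ z, F (rotation u z) = ∫ z, F z :=
    (rotation u).measurePreserving.integral_comp
      (rotation u).toHomeomorph.measurableEmbedding F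
  simp only [hrot, MeasureTheory.integral_neg] at hI
  linear_combination (-1/2 : ℂ) * hI

lemma mono_main (m : ℕ) (l : ℂ) (hl : 0 < l.re) :
    l * ∫ z, kerK (m + 1) l z *
      (Metric.ball (0 : ℂ) 1).indicator (fun z => z ^ m * starRingEnd ℂ z ^ 0) z = Real.pi := by
  have e : (fun z : ℂ => kerK (m + 1) l z *
      (Metric.ball (0 : ℂ) 1).indicator (fun z => z ^ m * starRingEnd ℂ z ^ 0) z)
      = fun z : ℂ => (fun r : ℝ => (Set.Iio (1:ℝ)).indicator
          (fun r : ℝ => ((r ^ 2 : ℝ) : ℂ) ^ l * ((r : ℂ) ^ 2)⁻¹) r) ‖z‖ := by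
    funext z
    by_cases h : ‖z‖ < 1
    · rw [Set.indicator_of_mem (by simpa using h)]
      simp only
      rw [Set.indicator_of_mem (by simpa using h), ← Complex.mul_conj']
      by_cases hz : z = 0
      · simp [hz, kerK]
      · have : starRingEnd ℂ z ≠ 0 := by simpa using hz
        unfold kerK
        rw [zpow_neg, zpow_natCast, pow_succ]
        field_simp
        simp [pow_succ, mul_assoc]
    · rw [Set.indicator_of_notMem (by simpa using h)]
      simp only
      rw [Set.indicator_of_notMem (by simpa using h), mul_zero]
  have hl0 : l ≠ 0 := by rintro rfl; simp at hl
  rw [e, MeasureTheory.integral_fun_norm_addHaar]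
  have e2 : ∫ y in Set.Ioi (0 : ℝ), y ^ (Module.finrank ℝ ℂ - 1) • (Set.Iio (1:ℝ)).indicator
          (fun r : ℝ => ((r ^ 2 : ℝ) : ℂ) ^ l * ((r : ℂ) ^ 2)⁻¹) y = 1 / (2 * l) := by
    have : ∀ y ∈ Set.Ioi (0:ℝ), y ^ (Module.finrank ℝ ℂ - 1) • (Set.Iio (1:ℝ)).indicator
          (fun r : ℝ => ((r ^ 2 : ℝ) : ℂ) ^ l * ((r : ℂ) ^ 2)⁻¹) y =
          (Set.Iio (1:ℝ)).indicator (fun y : ℝ => (y : ℂ) ^ (2 * l - 1)) y := by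
      intro y hy
      have hy' : (0:ℝ) < y := hy
      have hyc : (y : ℂ) ≠ 0 := by exact_mod_cast hy'.ne'
      by_cases h : y < 1
      · rw [Set.indicator_of_mem (by simpa using h), Set.indicator_of_mem (by simpa using h)]
        rw [Complex.cpow_sub _ _ hyc, Complex.cpow_one, two_mul, Complex.cpow_add _ _ hyc, pow_two,
          Complex.ofReal_mul, Complex.mul_cpow_ofReal_nonneg hy'.le hy'.le]
        simp only [Complex.finrank_real_complex, Complex.real_smul]
        simp
        field_simp
      · rw [Set.indicator_of_notMem (by simpa using h), Set.indicator_of_notMem (by simpa using h)]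
        simp
    rw [MeasureTheory.setIntegral_congr_fun measurableSet_Ioi this,
      MeasureTheory.setIntegral_indicator measurableSet_Iio, Set.Ioi_inter_Iio,
      ← MeasureTheory.integral_Ioc_eq_integral_Ioo, ← intervalIntegral.integral_of_le zero_le_one,
      integral_cpow (Or.inl (by simp; linarith))]
    simp [hl0]
  rw [e2]
  have e3 : (MeasureTheory.volume : MeasureTheory.Measure ℂ).real (Metric.ball 0 1) = Real.pi := by
    simp [MeasureTheory.measureReal_def, Complex.volume_ball]
  rw [e3, Complex.finrank_real_complex]
  simp
  field_simp


open MeasureTheory in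
/-- `λ ↦ λ ∫_ℂ |z|^{2λ} z^{-k} \bar z^{-1} φ(z) dA(z)` extends
holomorphically to `{Re λ > -δ}` with value `(π/(k-1)!)·(∂^{k-1}φ)(0)` at `0`. -/
theorem stmt10 (φ : ℂ → ℂ) (hφ : ContDiff ℝ (⊤ : ℕ∞) φ) (hsupp : HasCompactSupport φ)
    (k : ℕ) (hk : 1 ≤ k) :
    ∃ δ > (0 : ℝ), ∃ g : ℂ → ℂ,
      DifferentiableOn ℂ g {l : ℂ | -δ < l.re} ∧
      (∀ l : ℂ, (k : ℝ) / 2 < l.re →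
        Integrable (fun z : ℂ =>
          ((‖z‖ ^ 2 : ℝ) : ℂ) ^ l * z ^ (-(k : ℤ)) * (starRingEnd ℂ z)⁻¹ * φ z) ∧
        g l = l * ∫ z : ℂ,
          ((‖z‖ ^ 2 : ℝ) : ℂ) ^ l * z ^ (-(k : ℤ)) * (starRingEnd ℂ z)⁻¹ * φ z) ∧
      g 0 = ((Real.pi : ℂ) / (Nat.factorial (k - 1) : ℂ)) *
        (wirtingerDeriv^[k - 1] φ) 0 := by
  obtain ⟨m, rfl⟩ : ∃ m, k = m + 1 := ⟨k - 1, by omega⟩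
  obtain ⟨d, C, hd, hC⟩ := taylor_wirt hφ m
  obtain ⟨M, hM⟩ := hsupp.exists_bound_of_continuous hφ.continuous
  obtain ⟨r, hr⟩ := hsupp.isBounded.subset_ball (0 : ℂ)
  set I : ℕ → ℕ → ℂ → ℂ := fun n j =>
    (Metric.ball (0 : ℂ) 1).indicator (fun z => z ^ j * starRingEnd ℂ z ^ (n - j)) with hI
  set T : ℂ → ℂ := fun z => ∑ n ∈ Finset.range (m + 1), ∑ j ∈ Finset.range (n + 1),
    d n j * I n j z with hT
  set R : ℂ → ℂ := fun z => φ z - T z with hRdef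
  have hIm : ∀ n j, Measurable (I n j) := fun n j =>
    Measurable.indicator ((continuous_id.pow j).mul
      (Complex.continuous_conj.pow (n - j))).measurable measurableSet_ball
  have hTm : Measurable T := Finset.measurable_fun_sum _ fun n _ =>
    Finset.measurable_fun_sum _ fun j _ => (hIm n j).const_mul _
  have hRm : Measurable R := hφ.continuous.measurable.sub hTm
  have hT1 : ∀ z : ℂ, 1 ≤ ‖z‖ → T z = 0 := by
    intro z hz
    simp only [hT, hI]
    refine Finset.sum_eq_zero fun n _ => Finset.sum_eq_zero fun j _ => ?_
    rw [Set.indicator_of_notMem (by simpa using hz), mul_zero]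
  have hM0 : 0 ≤ M := (norm_nonneg _).trans (hM 0)
  have h1 : ∀ z, ‖R z‖ ≤ max C M * ‖z‖ ^ (m + 1) := by
    intro z
    by_cases h : ‖z‖ < 1
    · have e : T z = ∑ n ∈ Finset.range (m + 1), ∑ j ∈ Finset.range (n + 1),
          d n j * (z ^ j * starRingEnd ℂ z ^ (n - j)) := by
        simp only [hT, hI]
        refine Finset.sum_congr rfl fun n _ => Finset.sum_congr rfl fun j _ => ?_
        rw [Set.indicator_of_mem (by simpa using h)]
      simp only [hRdef]
      rw [e]
      exact (hC z h.le).trans (by gcongr; exact le_max_left _ _)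
    · have h' := not_lt.1 h
      simp only [hRdef]
      rw [hT1 z h', sub_zero]
      have := one_le_pow₀ h' (n := m + 1)
      have h3 := hM z
      have h4 := le_max_right C M
      nlinarith
  have hρ : (0:ℝ) < max r 1 := lt_max_of_lt_right one_pos
  have h2 : ∀ z, max r 1 ≤ ‖z‖ → R z = 0 := by
    intro z hz
    simp only [hRdef]
    rw [hT1 z ((le_max_right _ _).trans hz), sub_zero]
    by_contra h0
    have := hr (subset_tsupport _ h0)
    rw [mem_ball_zero_iff] at this
    exact absurd ((le_max_left r 1).trans hz) (not_le.2 this)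
  refine ⟨1 / 2, by norm_num, fun l => Real.pi * d m m + l * ∫ z, kerK (m + 1) l z * R z,
    ?_, ?_, ?_⟩
  · intro l hl
    have hl' : -(1 / 2) < l.re := hl
    exact ((differentiableAt_id.mul
      (ker_R_diff hRm (m + 1) _ _ hρ h1 h2 l hl')).const_add _).differentiableWithinAt
  · intro l hl
    have hl0 : 0 < l.re := lt_of_le_of_lt (by positivity) hl
    have hl0' : l ≠ 0 := by rintro rfl; simp at hl0
    have iR := ker_R_integrable hRm (m + 1) _ _ hρ h1 h2 l (by linarith)
    have iI : ∀ n j, Integrable fun z => d n j * (kerK (m + 1) l z * I n j z) := fun n j =>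
      (mono_integrable (m + 1) j (n - j) l hl).const_mul _
    have iS : ∀ n, Integrable fun z => ∑ j ∈ Finset.range (n + 1),
        d n j * (kerK (m + 1) l z * I n j z) := fun n =>
      integrable_finsetSum _ fun j _ => iI n j
    have iT : Integrable fun z => ∑ n ∈ Finset.range (m + 1), ∑ j ∈ Finset.range (n + 1),
        d n j * (kerK (m + 1) l z * I n j z) := integrable_finsetSum _ fun n _ => iS n
    have eq : (fun z : ℂ => ((‖z‖ ^ 2 : ℝ) : ℂ) ^ l * z ^ (-((m + 1 : ℕ) : ℤ)) *
        (starRingEnd ℂ z)⁻¹ * φ z) = fun z => kerK (m + 1) l z * R z +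
        ∑ n ∈ Finset.range (m + 1), ∑ j ∈ Finset.range (n + 1),
        d n j * (kerK (m + 1) l z * I n j z) := by
      funext z
      have : ∑ n ∈ Finset.range (m + 1), ∑ j ∈ Finset.range (n + 1),
        d n j * (kerK (m + 1) l z * I n j z) = kerK (m + 1) l z * T z := by
        simp only [hT, Finset.mul_sum]
        exact Finset.sum_congr rfl fun n _ => Finset.sum_congr rfl fun j _ => by ring
      rw [this]
      simp only [hRdef, kerK]
      ring
    rw [eq]
    refine ⟨iR.add iT, ?_⟩
    rw [integral_add iR iT, integral_finsetSum _ fun n _ => iS n]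
    have hval : ∑ n ∈ Finset.range (m + 1), ∫ z, ∑ j ∈ Finset.range (n + 1),
        d n j * (kerK (m + 1) l z * I n j z) = d m m * ∫ z, kerK (m + 1) l z * I m m z := by
      have hz : ∀ n j, n ≤ m → j ≤ n → ¬ (n = m ∧ j = m) →
          ∫ z, d n j * (kerK (m + 1) l z * I n j z) = 0 := by
        intro n j hn hj hne
        rw [integral_const_mul]
        have := mono_zero (m + 1) j (n - j) l (by omega)
        simp only [hI]
        rw [this, mul_zero]
      rw [Finset.sum_eq_single m]
      · rw [integral_finsetSum _ fun j _ => iI m j, Finset.sum_eq_single m, integral_const_mul]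
        · intro j hj hne
          have := Finset.mem_range.1 hj
          exact hz m j le_rfl (by omega) (by tauto)
        · simp
      · intro n hn hne
        rw [integral_finsetSum _ fun j _ => iI n j]
        refine Finset.sum_eq_zero fun j hj => ?_
        have h3 := Finset.mem_range.1 hj
        have h4 := Finset.mem_range.1 hn
        exact hz n j (by omega) (by omega) (by tauto)
      · simp
    rw [hval]
    have hmain := mono_main m l hl0
    have hI' : I m m = (Metric.ball (0 : ℂ) 1).indicator
        (fun z => z ^ m * starRingEnd ℂ z ^ 0) := by simp only [hI, Nat.sub_self]
    rw [← hI'] at hmain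
    linear_combination (-d m m) * hmain
  · simp only [hd, Nat.add_sub_cancel, zero_mul, add_zero]
    ring
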